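/- arXiv:1712.00589 — 9 statements merged into one kernel-verified Lean document; each statement's English description precedes it below -/
import Mathlib

section
/- Let d ≥ 1, let ρ > 0, and let X ⊆ ℝ^d be a finite set such that r_A ≠ ρ/2 for every nonempty A ⊆ X. Then there exists δ > 0 such that for every finite set Z ⊆ ℝ^d and every bijection f : X → Z with ‖f(x) − x‖ < δ for all x ∈ X, the Čech complexes Čech(X,ρ) and Čech(Z,ρ) are combinatorially equivalent via f: for every nonempty A ⊆ X, there exists y ∈ ℝ^d with ‖x − y‖ ≤ ρ/2 for all x ∈ A if and only if there exists y' ∈ ℝ^d with ‖f(x) − y'‖ ≤ ρ/2 for all x ∈ A. -/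
/-- The radius of the minimal bounding sphere of a finite nonempty set. -/
noncomputable def circumradius {d : ℕ} (A : Finset (EuclideanSpace ℝ (Fin d)))
    (hA : A.Nonempty) : ℝ :=
  ⨅ y : EuclideanSpace ℝ (Fin d), A.sup' hA fun x => ‖x - y‖

/-- If no nonempty subset of the finite set `X ⊆ ℝ^d` has minimal bounding radius
exactly `ρ/2`, then `X` is a generic Čech representation: there is `δ > 0` such that
moving each point by less than `δ` yields a combinatorially equivalent Čech complex. -/
theorem cech_generic_of_no_critical_circumradius
    (d : ℕ) (hd : 1 ≤ d) (ρ : ℝ) (hρ : 0 < ρ) (X : Finset (EuclideanSpace ℝ (Fin d)))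
    (hcrit : ∀ A : Finset (EuclideanSpace ℝ (Fin d)), A ⊆ X → ∀ hA : A.Nonempty,
      circumradius A hA ≠ ρ / 2) :
    ∃ δ > (0 : ℝ), ∀ Z : Finset (EuclideanSpace ℝ (Fin d)),
      ∀ f : EuclideanSpace ℝ (Fin d) → EuclideanSpace ℝ (Fin d),
        Set.BijOn f ↑X ↑Z → (∀ x ∈ X, ‖f x - x‖ < δ) →
        ∀ A : Finset (EuclideanSpace ℝ (Fin d)), A ⊆ X → A.Nonempty →
          ((∃ y : EuclideanSpace ℝ (Fin d), ∀ x ∈ A, ‖x - y‖ ≤ ρ / 2) ↔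
            (∃ y' : EuclideanSpace ℝ (Fin d), ∀ x ∈ A, ‖f x - y'‖ ≤ ρ / 2)) := by
  have hev : ∀ᶠ δ : ℝ in nhdsWithin 0 (Set.Ioi 0), ∀ A ∈ X.powerset, ∀ hA : A.Nonempty,
      δ < |circumradius A hA - ρ / 2| := by
    rw [Filter.eventually_all_finset]
    intro A hAX
    by_cases hA : A.Nonempty
    · have hpos : 0 < |circumradius A hA - ρ / 2| :=
        abs_pos.mpr (sub_ne_zero.mpr (hcrit A (Finset.mem_powerset.mp hAX) hA))
      filter_upwards [nhdsWithin_le_nhds (Iio_mem_nhds hpos)] with δ hδ _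
      exact hδ
    · exact Filter.Eventually.of_forall fun δ h => absurd h hA
  obtain ⟨δ, hδ, hδ0⟩ := (hev.and self_mem_nhdsWithin).exists
  refine ⟨δ, hδ0, ?_⟩
  intro Z f _ hf A hAX hA
  have h1 := hδ A (Finset.mem_powerset.mpr hAX) hA
  have hle : ∀ (y : EuclideanSpace ℝ (Fin d)) (r : ℝ), (∀ x ∈ A, ‖x - y‖ ≤ r) →
      circumradius A hA ≤ r := by
    intro y r hy
    refine (ciInf_le ?_ y).trans (Finset.sup'_le hA _ hy)
    refine ⟨0, ?_⟩
    rintro _ ⟨z, rfl⟩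
    obtain ⟨a, ha⟩ := hA
    exact (norm_nonneg (a - z)).trans (Finset.le_sup' (fun x => ‖x - z‖) ha)
  have hδ0' : 0 < δ := hδ0
  rcases lt_abs.mp h1 with h | h
  · constructor
    · rintro ⟨y, hy⟩
      linarith [hle y _ hy]
    · rintro ⟨y, hy⟩
      have := hle y (ρ / 2 + δ) (fun x hx => by
        have h2 := norm_sub_le_norm_sub_add_norm_sub x (f x) y
        have h3 := hf x (hAX hx)
        rw [norm_sub_rev] at h3
        linarith [hy x hx])
      linarith
  · have hlt : circumradius A hA < ρ / 2 - δ := by linarith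
    obtain ⟨y, hy⟩ := exists_lt_of_ciInf_lt hlt
    have hy' : ∀ x ∈ A, ‖x - y‖ < ρ / 2 - δ := (Finset.sup'_lt_iff hA).mp hy
    refine iff_of_true ⟨y, fun x hx => by linarith [hy' x hx]⟩ ⟨y, fun x hx => ?_⟩
    have h2 := norm_sub_le_norm_sub_add_norm_sub (f x) x y
    linarith [hy' x hx, hf x (hAX hx)]
end

section
/- Let d ≥ 1, let ρ > 0, and let X ⊆ ℝ^d be a finite set. Then there exists a scaling factor c ∈ (0,1] such that the map x ↦ c·x is a combinatorial equivalence between Čech(X,ρ) and Čech(cX,ρ) (i.e., for every nonempty A ⊆ X, A is a simplex of Čech(X,ρ) if and only if cA = {c·x : x ∈ A} is a simplex of Čech(cX,ρ)), and moreover r_{cA} ≠ ρ/2 for every nonempty A ⊆ X. -/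
open scoped Classical

lemma circ_le_iff {d : ℕ} (A : Finset (EuclideanSpace ℝ (Fin d))) (hA : A.Nonempty) (t : ℝ) :
    circumradius A hA ≤ t ↔ ∃ y : EuclideanSpace ℝ (Fin d), ∀ x ∈ A, ‖x - y‖ ≤ t := by
  obtain ⟨x0, hx0⟩ := hA
  have hA : A.Nonempty := ⟨x0, hx0⟩
  have hlow : ∀ y, ‖x0 - y‖ ≤ A.sup' hA fun x => ‖x - y‖ := fun y =>
    Finset.le_sup' (fun x => ‖x - y‖) hx0
  have hbdd : BddBelow (Set.range fun y : EuclideanSpace ℝ (Fin d) =>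
      A.sup' hA fun x => ‖x - y‖) := by
    refine ⟨0, ?_⟩
    rintro _ ⟨y, rfl⟩
    exact (norm_nonneg _).trans (hlow y)
  constructor
  · intro h
    have hc : Continuous fun y : EuclideanSpace ℝ (Fin d) => A.sup' hA fun x => ‖x - y‖ :=
      Continuous.finset_sup'_apply hA fun x _ => by fun_prop
    have ht : Filter.Tendsto (fun y : EuclideanSpace ℝ (Fin d) => A.sup' hA fun x => ‖x - y‖)
        (Filter.cocompact _) Filter.atTop := by
      refine Filter.tendsto_atTop_mono hlow ?_
      exact (tendsto_dist_left_cocompact_atTop x0).congr fun y => dist_eq_norm x0 y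
    obtain ⟨y, hy⟩ := hc.exists_forall_le ht
    refine ⟨y, fun x hx => ?_⟩
    exact ((Finset.le_sup' (fun x => ‖x - y‖) hx).trans (le_ciInf hy)).trans h
  · rintro ⟨y, hy⟩
    exact (ciInf_le hbdd y).trans (Finset.sup'_le _ _ hy)

lemma circ_scale_le_iff {d : ℕ} (A : Finset (EuclideanSpace ℝ (Fin d))) (hA : A.Nonempty)
    (c t : ℝ) (hc : 0 < c) :
    (∃ y : EuclideanSpace ℝ (Fin d), ∀ x ∈ A, ‖c • x - y‖ ≤ t) ↔
      c * circumradius A hA ≤ t := by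
  rw [mul_comm, ← le_div_iff₀ hc, circ_le_iff]
  have key : ∀ x y : EuclideanSpace ℝ (Fin d), ‖c • x - c • y‖ ≤ t ↔ ‖x - y‖ ≤ t / c := by
    intro x y
    rw [← smul_sub, norm_smul, Real.norm_of_nonneg hc.le, le_div_iff₀ hc, mul_comm]
  constructor
  · rintro ⟨y, hy⟩
    refine ⟨c⁻¹ • y, fun x hx => (key _ _).1 ?_⟩
    rw [smul_inv_smul₀ hc.ne']
    exact hy x hx
  · rintro ⟨y, hy⟩
    exact ⟨c • y, fun x hx => (key _ _).2 (hy x hx)⟩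

lemma circ_scale {d : ℕ} (A : Finset (EuclideanSpace ℝ (Fin d))) (hA : A.Nonempty)
    (c : ℝ) (hc : 0 < c) :
    circumradius (A.image fun x => c • x) (hA.image _) = c * circumradius A hA := by
  refine eq_of_forall_ge_iff fun t => ?_
  rw [circ_le_iff, ← circ_scale_le_iff A hA c t hc]
  simp only [Finset.forall_mem_image]

/-- Every finite set `X ⊆ ℝ^d` can be rescaled by a factor `c ∈ (0,1]` so that the
scaling map is a combinatorial equivalence of Čech complexes `Čech(X,ρ) ≃ Čech(cX,ρ)`
and no nonempty subset of the scaled set has minimal bounding radius exactly `ρ/2`. -/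
theorem exists_scaling_cech_equiv_no_critical_circumradius
    (d : ℕ) (hd : 1 ≤ d) (ρ : ℝ) (hρ : 0 < ρ) (X : Finset (EuclideanSpace ℝ (Fin d))) :
    ∃ c : ℝ, c ∈ Set.Ioc (0 : ℝ) 1 ∧
      ∀ A : Finset (EuclideanSpace ℝ (Fin d)), A ⊆ X → ∀ hA : A.Nonempty,
        (((∃ y : EuclideanSpace ℝ (Fin d), ∀ x ∈ A, ‖x - y‖ ≤ ρ / 2) ↔
          (∃ y' : EuclideanSpace ℝ (Fin d), ∀ x ∈ A, ‖c • x - y'‖ ≤ ρ / 2)) ∧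
        circumradius (A.image fun x => c • x) (hA.image _) ≠ ρ / 2) := by
  have hev : ∀ᶠ c : ℝ in nhdsWithin 1 (Set.Iio 1), ∀ A ∈ X.powerset, ∀ hA : A.Nonempty,
      ρ / 2 < circumradius A hA → ρ / 2 < c * circumradius A hA := by
    rw [Filter.eventually_all_finset]
    intro A _
    by_cases hA : A.Nonempty
    · by_cases h : ρ / 2 < circumradius A hA
      · have ht : Filter.Tendsto (fun c : ℝ => c * circumradius A hA)
            (nhdsWithin 1 (Set.Iio 1)) (nhds (1 * circumradius A hA)) :=
          (Continuous.tendsto (by fun_prop) 1).mono_left nhdsWithin_le_nhds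
        rw [one_mul] at ht
        filter_upwards [ht.eventually (lt_mem_nhds h)] with c hc _ _ using hc
      · exact Filter.Eventually.of_forall fun c _ h' => absurd h' h
    · exact Filter.Eventually.of_forall fun c h' => absurd h' hA
  have hpos : ∀ᶠ c : ℝ in nhdsWithin 1 (Set.Iio 1), 0 < c :=
    nhdsWithin_le_nhds (lt_mem_nhds one_pos)
  obtain ⟨c, hc, hc0, hc1⟩ := (hev.and (hpos.and self_mem_nhdsWithin)).exists
  have hc1 : c < 1 := hc1
  refine ⟨c, ⟨hc0, hc1.le⟩, fun A hAX hA => ?_⟩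
  rw [circ_scale A hA c hc0, circ_scale_le_iff A hA c _ hc0, ← circ_le_iff A hA]
  rcases le_or_gt (circumradius A hA) (ρ / 2) with h | h
  · have hlt : c * circumradius A hA < ρ / 2 := by
      have h1 : c * circumradius A hA ≤ c * (ρ / 2) := mul_le_mul_of_nonneg_left h hc0.le
      nlinarith
    exact ⟨⟨fun _ => hlt.le, fun _ => h⟩, hlt.ne⟩
  · have hlt := hc A (Finset.mem_powerset.2 hAX) hA h
    exact ⟨⟨fun h' => absurd h' h.not_ge, fun h' => absurd h' hlt.not_ge⟩, hlt.ne'⟩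
end

section
/- Let d ≥ 1, let ρ > 0, and let X ⊆ ℝ^d be a finite set. Then there exist a finite set Y ⊆ ℝ^d, a bijection g : X → Y such that Čech(X,ρ) and Čech(Y,ρ) are combinatorially equivalent via g, and a δ > 0 such that for every finite set Z ⊆ ℝ^d and every bijection f : Y → Z with ‖f(y) − y‖ < δ for all y ∈ Y, the Čech complexes Čech(Y,ρ) and Čech(Z,ρ) are combinatorially equivalent via f. In other words, every finite simplicial complex admitting a d-dimensional Čech representation with respect to ρ admits a generic d-dimensional Čech representation with respect to ρ. -/
open scoped Classical

/-- `A` is a simplex of the Čech complex with parameter `ρ` (of any point set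
containing `A`). -/
def IsCechSimplex {d : ℕ} (ρ : ℝ) (A : Finset (EuclideanSpace ℝ (Fin d))) : Prop :=
  ∃ y : EuclideanSpace ℝ (Fin d), ∀ x ∈ A, ‖x - y‖ ≤ ρ / 2

lemma cech_mono {d : ℕ} {r s : ℝ} (h : r ≤ s) {A : Finset (EuclideanSpace ℝ (Fin d))}
    (hA : IsCechSimplex r A) : IsCechSimplex s A := by
  obtain ⟨y, hy⟩ := hA
  exact ⟨y, fun x hx => (hy x hx).trans (by linarith)⟩

lemma cech_move {d : ℕ} {r δ : ℝ} {A : Finset (EuclideanSpace ℝ (Fin d))}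
    (f : EuclideanSpace ℝ (Fin d) → EuclideanSpace ℝ (Fin d))
    (hf : ∀ y ∈ A, ‖f y - y‖ < δ) :
    (IsCechSimplex r A → IsCechSimplex (r + 2 * δ) (A.image f)) ∧
    (IsCechSimplex r (A.image f) → IsCechSimplex (r + 2 * δ) A) := by
  constructor
  · rintro ⟨y, hy⟩
    refine ⟨y, fun z hz => ?_⟩
    obtain ⟨x, hx, rfl⟩ := Finset.mem_image.1 hz
    have h1 := norm_sub_le_norm_sub_add_norm_sub (f x) x y
    linarith [hf x hx, hy x hx]
  · rintro ⟨y, hy⟩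
    refine ⟨y, fun x hx => ?_⟩
    have h1 := norm_sub_le_norm_sub_add_norm_sub x (f x) y
    have h2 := hf x hx
    rw [norm_sub_rev] at h2
    linarith [hy (f x) (Finset.mem_image_of_mem f hx)]

lemma cech_smul {d : ℕ} {r c : ℝ} (hc : 0 < c) {A : Finset (EuclideanSpace ℝ (Fin d))} :
    IsCechSimplex (c * r) (A.image (fun x => c • x)) ↔ IsCechSimplex r A := by
  have key : ∀ x y : EuclideanSpace ℝ (Fin d), ‖c • x - c • y‖ = c * ‖x - y‖ := by
    intro x y
    rw [← smul_sub, norm_smul, Real.norm_of_nonneg hc.le]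
  constructor
  · rintro ⟨y, hy⟩
    refine ⟨c⁻¹ • y, fun x hx => ?_⟩
    have h1 := hy _ (Finset.mem_image_of_mem _ hx)
    have h2 := key x (c⁻¹ • y)
    rw [smul_inv_smul₀ hc.ne'] at h2
    rw [h2] at h1
    refine le_of_mul_le_mul_left ?_ hc
    linarith
  · rintro ⟨y, hy⟩
    refine ⟨c • y, fun z hz => ?_⟩
    obtain ⟨x, hx, rfl⟩ := Finset.mem_image.1 hz
    rw [key]
    have := mul_le_mul_of_nonneg_left (hy x hx) hc.le
    linarith

lemma cech_gap {d : ℕ} {ρ : ℝ} (A : Finset (EuclideanSpace ℝ (Fin d))) :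
    ∃ ε > (0 : ℝ), IsCechSimplex (ρ + ε) A → IsCechSimplex ρ A := by
  rcases A.eq_empty_or_nonempty with rfl | ⟨a, ha⟩
  · exact ⟨1, one_pos, fun _ => ⟨0, by simp⟩⟩
  by_contra! hcon
  have hne := hcon 1 one_pos
  let K : ℕ → Set (EuclideanSpace ℝ (Fin d)) :=
    fun n => ⋂ x ∈ A, Metric.closedBall x ((ρ + 1 / ((n : ℝ) + 1)) / 2)
  have hmem : ∀ n y, y ∈ K n ↔ ∀ x ∈ A, ‖x - y‖ ≤ (ρ + 1 / ((n : ℝ) + 1)) / 2 := by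
    intro n y
    simp only [K, Set.mem_iInter, Metric.mem_closedBall, dist_eq_norm, norm_sub_rev y]
  have hcl : ∀ n, IsClosed (K n) := fun n =>
    isClosed_biInter fun x _ => Metric.isClosed_closedBall
  have hcomp : IsCompact (K 0) :=
    (isCompact_closedBall a _).of_isClosed_subset (hcl 0) (Set.biInter_subset_of_mem ha)
  have hnon : ∀ n, (K n).Nonempty := by
    intro n
    obtain ⟨y, hy⟩ := (hcon (1 / ((n : ℝ) + 1)) (by positivity)).1
    exact ⟨y, (hmem n y).2 hy⟩
  have hanti : ∀ n, K (n + 1) ⊆ K n := by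
    intro n y hy
    rw [hmem] at hy ⊢
    intro x hx
    have := Nat.one_div_le_one_div (α := ℝ) (Nat.le_succ n)
    have h2 := hy x hx
    push_cast at this h2
    linarith
  obtain ⟨y, hy⟩ :=
    IsCompact.nonempty_iInter_of_sequence_nonempty_isCompact_isClosed K hanti hnon hcomp hcl
  rw [Set.mem_iInter] at hy
  refine hne.2 ⟨y, fun x hx => ?_⟩
  have ht : Filter.Tendsto (fun n : ℕ => (ρ + 1 / ((n : ℝ) + 1)) / 2) Filter.atTop
      (nhds ((ρ + 0) / 2)) :=
    (tendsto_one_div_add_atTop_nhds_zero_nat.const_add ρ).div_const 2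
  rw [add_zero] at ht
  exact ge_of_tendsto' ht fun n => (hmem n y).1 (hy n) x hx

lemma cech_gap_unif {d : ℕ} {ρ : ℝ} (S : Finset (Finset (EuclideanSpace ℝ (Fin d)))) :
    ∃ ε > (0 : ℝ), ∀ A ∈ S, IsCechSimplex (ρ + ε) A → IsCechSimplex ρ A := by
  induction S using Finset.induction_on with
  | empty => exact ⟨1, one_pos, by simp⟩
  | insert A S _ ih =>
    obtain ⟨e, he, h⟩ := ih
    obtain ⟨e', he', h'⟩ := cech_gap (ρ := ρ) A
    refine ⟨min e e', lt_min he he', fun B hB hs => ?_⟩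
    rcases Finset.mem_insert.1 hB with rfl | hB
    · exact h' (cech_mono (by linarith [min_le_right e e']) hs)
    · exact h B hB (cech_mono (by linarith [min_le_left e e']) hs)

/-- Every finite simplicial complex admitting a `d`-dimensional Čech representation
with respect to `ρ` admits a generic one: there are a point set `Y`, a bijection
`g : X → Y` realizing a combinatorial equivalence `Čech(X,ρ) ≃ Čech(Y,ρ)`, and a
`δ > 0` such that moving each point of `Y` by less than `δ` yields a Čech complex
combinatorially equivalent to `Čech(Y,ρ)`. -/
theorem exists_generic_cech_representation
    (d : ℕ) (hd : 1 ≤ d) (ρ : ℝ) (hρ : 0 < ρ) (X : Finset (EuclideanSpace ℝ (Fin d))) :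
    ∃ Y : Finset (EuclideanSpace ℝ (Fin d)),
      ∃ g : EuclideanSpace ℝ (Fin d) → EuclideanSpace ℝ (Fin d),
        Set.BijOn g ↑X ↑Y ∧
        (∀ A : Finset (EuclideanSpace ℝ (Fin d)), A ⊆ X → A.Nonempty →
          (IsCechSimplex ρ A ↔ IsCechSimplex ρ (A.image g))) ∧
        ∃ δ > (0 : ℝ), ∀ Z : Finset (EuclideanSpace ℝ (Fin d)),
          ∀ f : EuclideanSpace ℝ (Fin d) → EuclideanSpace ℝ (Fin d),
            Set.BijOn f ↑Y ↑Z → (∀ y ∈ Y, ‖f y - y‖ < δ) →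
            ∀ B : Finset (EuclideanSpace ℝ (Fin d)), B ⊆ Y → B.Nonempty →
              (IsCechSimplex ρ B ↔ IsCechSimplex ρ (B.image f)) := by
  obtain ⟨ε, hε, hgap⟩ := cech_gap_unif (ρ := ρ) X.powerset
  obtain ⟨δ, hδ, hδe⟩ : ∃ δ > (0 : ℝ), 4 * δ * (ρ + ε) = ρ * ε :=
    ⟨ρ * ε / (4 * (ρ + ε)), by positivity, by field_simp⟩
  obtain ⟨c, hcρ⟩ : ∃ c : ℝ, c * ρ = ρ - 2 * δ := ⟨(ρ - 2 * δ) / ρ, by field_simp⟩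
  have hc : 0 < c := by
    have : 0 < c * ρ := by rw [hcρ]; nlinarith
    exact pos_of_mul_pos_left this hρ.le
  have hcε : ρ + 2 * δ ≤ c * (ρ + ε) := by
    refine le_of_mul_le_mul_left ?_ hρ
    have : ρ * (c * (ρ + ε)) = (ρ - 2 * δ) * (ρ + ε) := by rw [← hcρ]; ring
    rw [this]
    nlinarith [mul_pos hδ hε]
  have up : ∀ A ⊆ X, IsCechSimplex (ρ + 2 * δ) (A.image (fun x => c • x)) →
      IsCechSimplex ρ A := fun A hA h =>
    hgap A (Finset.mem_powerset.2 hA) ((cech_smul hc).1 (cech_mono hcε h))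
  have down : ∀ A : Finset (EuclideanSpace ℝ (Fin d)), IsCechSimplex ρ A →
      IsCechSimplex (ρ - 2 * δ) (A.image (fun x => c • x)) := fun A h => by
    rw [← hcρ]; exact (cech_smul hc).2 h
  refine ⟨X.image (fun x => c • x), fun x => c • x, ?_, ?_, δ, hδ, ?_⟩
  · rw [Finset.coe_image]
    exact (smul_right_injective _ hc.ne').injOn.bijOn_image
  · intro A hA _
    exact ⟨fun h => cech_mono (by linarith) (down A h),
      fun h => up A hA (cech_mono (by linarith) h)⟩
  · intro Z f _ hf B hB _
    obtain ⟨A, hA, rfl⟩ := Finset.subset_image_iff.1 hB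
    have hA : A ⊆ X := by exact_mod_cast hA
    have hm := fun r => cech_move (r := r) f (fun y hy => hf y (hB hy))
    constructor
    · intro h
      exact cech_mono (by linarith)
        ((hm _).1 (down A (up A hA (cech_mono (by linarith) h))))
    · intro h
      exact cech_mono (by linarith) (down A (up A hA ((hm ρ).2 h)))
end

section
/- Let d ≥ 1, let ρ > 0, and let X ⊆ ℝ^d be a finite set. Then there exist a finite set Y ⊆ ℝ^d, a bijection g : X → Y such that the Vietoris–Rips complexes VR(X,ρ) and VR(Y,ρ) are combinatorially equivalent via g, and a δ > 0 such that for every finite set Z ⊆ ℝ^d and every bijection f : Y → Z with ‖f(y) − y‖ < δ for all y ∈ Y, the complexes VR(Y,ρ) and VR(Z,ρ) are combinatorially equivalent via f. In other words, every finite simplicial complex admitting a d-dimensional Vietoris–Rips representation with respect to ρ admits a generic d-dimensional Vietoris–Rips representation with respect to ρ. -/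
open scoped Classical

/-- `A` is a simplex of the Vietoris–Rips complex with parameter `ρ` (of any point
set containing `A`): all pairwise distances are at most `ρ`. -/
def IsVRSimplex {d : ℕ} (ρ : ℝ) (A : Finset (EuclideanSpace ℝ (Fin d))) : Prop :=
  ∀ x ∈ A, ∀ x' ∈ A, ‖x - x'‖ ≤ ρ

theorem vr_image_iff {d : ℕ} (ρ : ℝ) (X : Finset (EuclideanSpace ℝ (Fin d)))
    (g : EuclideanSpace ℝ (Fin d) → EuclideanSpace ℝ (Fin d))
    (h : ∀ x ∈ X, ∀ y ∈ X, (‖x - y‖ ≤ ρ ↔ ‖g x - g y‖ ≤ ρ))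
    (A : Finset (EuclideanSpace ℝ (Fin d))) (hA : A ⊆ X) :
    IsVRSimplex ρ A ↔ IsVRSimplex ρ (A.image g) := by
  unfold IsVRSimplex
  simp only [Finset.forall_mem_image]
  exact forall₂_congr fun x hx => forall₂_congr fun y hy => h x (hA hx) y (hA hy)

/-- Every finite simplicial complex admitting a `d`-dimensional Vietoris–Rips
representation with respect to `ρ` admits a generic one: there are a point set `Y`,
a bijection `g : X → Y` realizing a combinatorial equivalence `VR(X,ρ) ≃ VR(Y,ρ)`,
and a `δ > 0` such that moving each point of `Y` by less than `δ` yields a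
Vietoris–Rips complex combinatorially equivalent to `VR(Y,ρ)`. -/
theorem exists_generic_vietorisRips_representation
    (d : ℕ) (hd : 1 ≤ d) (ρ : ℝ) (hρ : 0 < ρ) (X : Finset (EuclideanSpace ℝ (Fin d))) :
    ∃ Y : Finset (EuclideanSpace ℝ (Fin d)),
      ∃ g : EuclideanSpace ℝ (Fin d) → EuclideanSpace ℝ (Fin d),
        Set.BijOn g ↑X ↑Y ∧
        (∀ A : Finset (EuclideanSpace ℝ (Fin d)), A ⊆ X → A.Nonempty →
          (IsVRSimplex ρ A ↔ IsVRSimplex ρ (A.image g))) ∧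
        ∃ δ > (0 : ℝ), ∀ Z : Finset (EuclideanSpace ℝ (Fin d)),
          ∀ f : EuclideanSpace ℝ (Fin d) → EuclideanSpace ℝ (Fin d),
            Set.BijOn f ↑Y ↑Z → (∀ y ∈ Y, ‖f y - y‖ < δ) →
            ∀ B : Finset (EuclideanSpace ℝ (Fin d)), B ⊆ Y → B.Nonempty →
              (IsVRSimplex ρ B ↔ IsVRSimplex ρ (B.image f)) := by
  have h1 : ∀ᶠ c : ℝ in nhdsWithin 1 (Set.Iio 1), ∀ x ∈ X, ∀ y ∈ X,
      ρ < ‖x - y‖ → ρ < c * ‖x - y‖ := by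
    refine (Filter.eventually_all_finset X).2 fun x _ =>
      (Filter.eventually_all_finset X).2 fun y _ => ?_
    by_cases hxy : ρ < ‖x - y‖
    · have ht : Filter.Tendsto (fun c : ℝ => c * ‖x - y‖) (nhds 1) (nhds (1 * ‖x - y‖)) :=
        (continuous_id.mul continuous_const).tendsto 1
      rw [one_mul] at ht
      filter_upwards [(ht.eventually (lt_mem_nhds hxy)).filter_mono nhdsWithin_le_nhds] with c hc _
      exact hc
    · exact Filter.Eventually.of_forall fun c h => absurd h hxy
  have h0 : ∀ᶠ c : ℝ in nhdsWithin 1 (Set.Iio 1), 0 < c :=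
    (lt_mem_nhds one_pos).filter_mono nhdsWithin_le_nhds
  obtain ⟨c, ⟨hc, hc0⟩, hc1⟩ := ((h1.and h0).and self_mem_nhdsWithin).exists
  have hc1' : c < 1 := hc1
  have hn : ∀ x y : EuclideanSpace ℝ (Fin d), ‖c • x - c • y‖ = c * ‖x - y‖ := by
    intro x y
    rw [← smul_sub, norm_smul, Real.norm_of_nonneg hc0.le]
  have hlt : ∀ x y : EuclideanSpace ℝ (Fin d), ‖x - y‖ ≤ ρ → c * ‖x - y‖ < ρ := by
    intro x y h
    nlinarith [mul_le_mul_of_nonneg_left h hc0.le]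
  have hY : ∀ y ∈ X.image (fun x => c • x), ∀ y' ∈ X.image (fun x => c • x),
      ‖y - y'‖ ≠ ρ := by
    simp only [Finset.forall_mem_image]
    intro x hx y hy
    rw [hn]
    rcases le_or_gt ‖x - y‖ ρ with h | h
    · exact (hlt x y h).ne
    · exact (hc x hx y hy h).ne'
  refine ⟨X.image (fun x => c • x), fun x => c • x, ⟨?_, ?_, ?_⟩, ?_, ?_⟩
  · intro x hx
    exact Finset.mem_coe.2 (Finset.mem_image_of_mem _ hx)
  · exact (smul_right_injective _ hc0.ne').injOn
  · rw [Finset.coe_image]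
    exact Set.surjOn_image _ _
  · intro A hA _
    refine vr_image_iff ρ X _ (fun x hx y hy => ?_) A hA
    rw [hn]
    refine ⟨fun h => (hlt x y h).le, fun h => ?_⟩
    by_contra h'
    exact absurd (hc x hx y hy (not_le.1 h')) (not_lt.2 h)
  · generalize X.image (fun x => c • x) = Y at hY
    have h2 : ∀ᶠ δ : ℝ in nhdsWithin 0 (Set.Ioi 0), ∀ x ∈ Y, ∀ y ∈ Y,
        δ < |‖x - y‖ - ρ| / 2 := by
      refine (Filter.eventually_all_finset Y).2 fun x hx =>
        (Filter.eventually_all_finset Y).2 fun y hy => ?_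
      have : 0 < |‖x - y‖ - ρ| / 2 := half_pos (abs_pos.2 (sub_ne_zero.2 (hY x hx y hy)))
      exact (gt_mem_nhds this).filter_mono nhdsWithin_le_nhds
    obtain ⟨δ, hδ, hδ0⟩ := (h2.and self_mem_nhdsWithin).exists
    refine ⟨δ, hδ0, fun Z f _ hf B hB _ => vr_image_iff ρ Y f (fun x hx y hy => ?_) B hB⟩
    have e1 : |‖f x - f y‖ - ‖x - y‖| < 2 * δ := by
      calc |‖f x - f y‖ - ‖x - y‖| ≤ ‖(f x - f y) - (x - y)‖ := abs_norm_sub_norm_le _ _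
        _ = ‖(f x - x) - (f y - y)‖ := by congr 1; abel
        _ ≤ ‖f x - x‖ + ‖f y - y‖ := norm_sub_le _ _
        _ < 2 * δ := by linarith [hf x hx, hf y hy]
    have e2 := hδ x hx y hy
    rw [abs_lt] at e1
    constructor
    · intro h
      rw [abs_of_nonpos (by linarith)] at e2
      linarith
    · intro h
      by_contra h'
      rw [abs_of_pos (by linarith [not_le.1 h'])] at e2
      linarith
end

section
/- Let d ≥ 1 and let X, Y ⊆ ℝ^d be finite nonempty sets with |X| = |Y| ≤ 2. Then dist(X,Y) = d_Haus(X,Y); that is, the minimum over bijections f : X → Y of max_{x ∈ X} ‖f(x) − x‖ equals the Hausdorff distance between X and Y. In particular, for two-element sets X = {x₁,x₂} and Y = {y₁,y₂}, min( max(‖x₁−y₁‖, ‖x₂−y₂‖), max(‖x₁−y₂‖, ‖x₂−y₁‖) ) = d_Haus(X,Y). -/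
/-- The matching distance between two finite point sets: the infimum over bijections
`f : X → Y` of the maximal displacement `max_{x ∈ X} ‖f x - x‖`. -/
noncomputable def matchDist {d : ℕ} (X Y : Finset (EuclideanSpace ℝ (Fin d)))
    (hX : X.Nonempty) : ℝ :=
  sInf ((fun f : EuclideanSpace ℝ (Fin d) → EuclideanSpace ℝ (Fin d) =>
    X.sup' hX fun x => ‖f x - x‖) '' {f | Set.BijOn f ↑X ↑Y})

theorem aux_near {d : ℕ} (X Y : Set (EuclideanSpace ℝ (Fin d))) (hX : X.Finite) (hY : Y.Finite)
    (hYn : Y.Nonempty) (x : EuclideanSpace ℝ (Fin d)) (hx : x ∈ X) :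
    ∃ y ∈ Y, ‖x - y‖ ≤ Metric.hausdorffDist X Y := by
  obtain ⟨y, hy, h⟩ := hY.isCompact.exists_infDist_eq_dist hYn x
  refine ⟨y, hy, ?_⟩
  rw [← dist_eq_norm, ← h]
  exact Metric.infDist_le_hausdorffDist_of_mem hx
    (Metric.hausdorffEDist_ne_top_of_nonempty_of_bounded ⟨x, hx⟩ hYn hX.isBounded hY.isBounded)

theorem aux_upper {d : ℕ} (X Y : Set (EuclideanSpace ℝ (Fin d)))
    (f : EuclideanSpace ℝ (Fin d) → EuclideanSpace ℝ (Fin d)) (hf : Set.BijOn f X Y)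
    (r : ℝ) (hr : 0 ≤ r) (h : ∀ x ∈ X, ‖f x - x‖ ≤ r) : Metric.hausdorffDist X Y ≤ r := by
  apply Metric.hausdorffDist_le_of_mem_dist hr
  · intro x hx
    exact ⟨f x, hf.mapsTo hx, by rw [dist_comm, dist_eq_norm]; exact h x hx⟩
  · intro y hy
    obtain ⟨x, hx, rfl⟩ := hf.surjOn hy
    exact ⟨x, hx, by rw [dist_eq_norm]; exact h x hx⟩

theorem aux_pair {d : ℕ} (x₁ x₂ y₁ y₂ : EuclideanSpace ℝ (Fin d)) :
      min (max ‖x₁ - y₁‖ ‖x₂ - y₂‖) (max ‖x₁ - y₂‖ ‖x₂ - y₁‖) =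
        Metric.hausdorffDist ({x₁, x₂} : Set (EuclideanSpace ℝ (Fin d))) {y₁, y₂} := by
  apply le_antisymm
  · have f1 : ({x₁, x₂} : Set (EuclideanSpace ℝ (Fin d))).Finite := Set.toFinite _
    have f2 : ({y₁, y₂} : Set (EuclideanSpace ℝ (Fin d))).Finite := Set.toFinite _
    have a := aux_near _ _ f1 f2 ⟨y₁, by simp⟩ x₁ (by simp)
    have b := aux_near _ _ f1 f2 ⟨y₁, by simp⟩ x₂ (by simp)
    have c := aux_near _ _ f2 f1 ⟨x₁, by simp⟩ y₁ (by simp)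
    have e := aux_near _ _ f2 f1 ⟨x₁, by simp⟩ y₂ (by simp)
    rw [Metric.hausdorffDist_comm] at c e
    simp only [Set.mem_insert_iff, Set.mem_singleton_iff, exists_eq_or_imp, exists_eq_left] at a b c e
    rw [norm_sub_rev y₁ x₁, norm_sub_rev y₁ x₂] at c
    rw [norm_sub_rev y₂ x₁, norm_sub_rev y₂ x₂] at e
    rw [min_le_iff, max_le_iff, max_le_iff]
    tauto
  · apply le_min
    · apply Metric.hausdorffDist_le_of_mem_dist (le_max_of_le_left (norm_nonneg _)) <;>
      simp [dist_eq_norm, norm_sub_rev y₁, norm_sub_rev y₂]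
    · apply Metric.hausdorffDist_le_of_mem_dist (le_max_of_le_left (norm_nonneg _)) <;>
      simp [dist_eq_norm, norm_sub_rev y₁, norm_sub_rev y₂]

theorem aux_bij {d : ℕ} (x₁ x₂ y₁ y₂ : EuclideanSpace ℝ (Fin d)) (hx : x₁ ≠ x₂) (hy : y₁ ≠ y₂)
    (r : ℝ) (h1 : ‖x₁ - y₁‖ ≤ r) (h2 : ‖x₂ - y₂‖ ≤ r) :
    ∃ f : EuclideanSpace ℝ (Fin d) → EuclideanSpace ℝ (Fin d),
      Set.BijOn f {x₁, x₂} {y₁, y₂} ∧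
      ∀ x ∈ ({x₁, x₂} : Set (EuclideanSpace ℝ (Fin d))), ‖f x - x‖ ≤ r := by
  classical
  refine ⟨fun x => if x = x₁ then y₁ else y₂, ⟨?_, ?_, ?_⟩, ?_⟩
  · intro x hx'
    dsimp only
    split_ifs <;> simp
  · rintro a (rfl | rfl) b (rfl | rfl) <;> simp [hx, hx.symm, hy, hy.symm]
  · rintro y (rfl | rfl)
    · exact ⟨x₁, by simp⟩
    · exact ⟨x₂, by simp [hx.symm]⟩
  · rintro a (rfl | rfl)
    · simpa [norm_sub_rev y₁] using h1
    · simpa [hx.symm, norm_sub_rev y₂] using h2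

theorem aux_exists {d : ℕ} (X Y : Finset (EuclideanSpace ℝ (Fin d))) (hX : X.Nonempty)
    (hc : X.card = Y.card) (h2 : X.card ≤ 2) :
    ∃ f : EuclideanSpace ℝ (Fin d) → EuclideanSpace ℝ (Fin d),
      Set.BijOn f (↑X) (↑Y) ∧ ∀ x ∈ (↑X : Set (EuclideanSpace ℝ (Fin d))), ‖f x - x‖ ≤
        Metric.hausdorffDist (↑X : Set (EuclideanSpace ℝ (Fin d))) ↑Y := by
  classical
  have h0 := hX.card_pos
  have h12 : X.card = 1 ∨ X.card = 2 := by omega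
  rcases h12 with h | h
  · obtain ⟨x, rfl⟩ := Finset.card_eq_one.1 h
    obtain ⟨y, rfl⟩ := Finset.card_eq_one.1 (hc ▸ h)
    refine ⟨fun _ => y, ?_, ?_⟩
    · simp
    · simp [dist_eq_norm, norm_sub_rev y]
  · obtain ⟨x₁, x₂, hx, rfl⟩ := Finset.card_eq_two.1 h
    obtain ⟨y₁, y₂, hy, rfl⟩ := Finset.card_eq_two.1 (hc ▸ h)
    have key := (aux_pair x₁ x₂ y₁ y₂).le
    push_cast
    rw [min_le_iff, max_le_iff, max_le_iff] at key
    rcases key with k | k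
    · exact aux_bij _ _ _ _ hx hy _ k.1 k.2
    · have := aux_bij _ _ _ _ hx hy.symm _ k.1 k.2
      rwa [Set.pair_comm y₂ y₁] at this

/-- For finite nonempty sets `X, Y ⊆ ℝ^d` with `|X| = |Y| ≤ 2`, the matching distance
equals the Hausdorff distance.  In particular, for two-element sets
`X = {x₁, x₂}` and `Y = {y₁, y₂}`,
`min (max ‖x₁-y₁‖ ‖x₂-y₂‖) (max ‖x₁-y₂‖ ‖x₂-y₁‖) = d_Haus(X,Y)`. -/
theorem matchDist_eq_hausdorffDist_of_card_le_two (d : ℕ) (hd : 1 ≤ d) :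
    (∀ X Y : Finset (EuclideanSpace ℝ (Fin d)), ∀ hX : X.Nonempty,
      X.card = Y.card → X.card ≤ 2 →
        matchDist X Y hX = Metric.hausdorffDist (↑X : Set (EuclideanSpace ℝ (Fin d))) ↑Y) ∧
    (∀ x₁ x₂ y₁ y₂ : EuclideanSpace ℝ (Fin d), x₁ ≠ x₂ → y₁ ≠ y₂ →
      min (max ‖x₁ - y₁‖ ‖x₂ - y₂‖) (max ‖x₁ - y₂‖ ‖x₂ - y₁‖) =
        Metric.hausdorffDist ({x₁, x₂} : Set (EuclideanSpace ℝ (Fin d))) {y₁, y₂}) := by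
  refine ⟨?_, fun x₁ x₂ y₁ y₂ _ _ => aux_pair x₁ x₂ y₁ y₂⟩
  intro X Y hX hc h2
  obtain ⟨f, hf, hle⟩ := aux_exists X Y hX hc h2
  unfold matchDist
  have hlow : ∀ r ∈ ((fun f : EuclideanSpace ℝ (Fin d) → EuclideanSpace ℝ (Fin d) =>
      X.sup' hX fun x => ‖f x - x‖) '' {f | Set.BijOn f ↑X ↑Y}),
      Metric.hausdorffDist (↑X : Set (EuclideanSpace ℝ (Fin d))) ↑Y ≤ r := by
    rintro r ⟨g, hg, rfl⟩
    have hb : ∀ x ∈ X, ‖g x - x‖ ≤ X.sup' hX fun x => ‖g x - x‖ := fun x hx =>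
      Finset.le_sup' (fun x => ‖g x - x‖) hx
    obtain ⟨x, hx⟩ := hX
    exact aux_upper _ _ g hg _ ((norm_nonneg _).trans (hb x hx)) hb
  apply le_antisymm
  · exact (csInf_le ⟨_, hlow⟩ ⟨f, hf, rfl⟩).trans (Finset.sup'_le _ _ hle)
  · exact le_csInf ⟨_, f, hf, rfl⟩ hlow
end

section
/- Let n ≥ 2 and let X = {x_0, …, x_{2n−1}} ⊆ ℝ² be the 2n points x_k = (cos(kπ/n), sin(kπ/n)) equidistributed on the unit circle. Let ρ satisfy 2·cos(π/(2n)) ≤ ρ < 2. Then a subset F ⊆ X is a simplex of the Vietoris–Rips complex VR(X,ρ) if and only if F contains no antipodal pair, i.e. there is no index k with both x_k ∈ F and x_{(k+n) mod 2n} ∈ F. Hence VR(X,ρ) is combinatorially equivalent to the boundary complex of the n-dimensional cross-polytope. -/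
open Real
open scoped Classical

/-- The `k`-th of `2n` points equidistributed on the unit circle in `ℝ²`. -/
noncomputable def circlePt (n k : ℕ) : EuclideanSpace ℝ (Fin 2) :=
  (WithLp.equiv 2 (Fin 2 → ℝ)).symm ![Real.cos (k * π / n), Real.sin (k * π / n)]

theorem circlePt_dist (n i j : ℕ) (hn : 2 ≤ n) :
    ‖circlePt n i - circlePt n j‖ = 2 * |Real.sin (((i : ℝ) - j) * (π / (2 * n)))| := by
  have hn0 : (n : ℝ) ≠ 0 := by positivity
  rw [EuclideanSpace.norm_eq, Fin.sum_univ_two]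
  have h2 : (2 : ℝ) * |Real.sin (((i : ℝ) - j) * (π / (2 * n)))|
      = √((2 * Real.sin (((i : ℝ) - j) * (π / (2 * n)))) ^ 2) := by
    rw [Real.sqrt_sq_eq_abs, abs_mul]; norm_num
  rw [h2]
  congr 1
  simp only [circlePt, Real.norm_eq_abs, sq_abs]
  simp
  have e1 : (i : ℝ) * π / n - j * π / n = 2 * (((i : ℝ) - j) * (π / (2 * n))) := by
    field_simp
  have h3 := Real.cos_sub ((i : ℝ) * π / n) (j * π / n)
  rw [e1, Real.cos_two_mul] at h3
  have h4 := Real.sin_sq_add_cos_sq (((i : ℝ) - j) * (π / (2 * n)))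
  have h5 := Real.sin_sq_add_cos_sq ((i : ℝ) * π / n)
  have h6 := Real.sin_sq_add_cos_sq ((j : ℝ) * π / n)
  linarith

theorem circlePt_le (n i j : ℕ) (hn : 2 ≤ n) (hi : i < 2 * n) (hij : j ≤ i) (hne : i ≠ j + n) :
    ‖circlePt n i - circlePt n j‖ ≤ 2 * Real.cos (π / (2 * n)) := by
  rw [circlePt_dist n i j hn]
  obtain ⟨d, rfl⟩ := Nat.exists_eq_add_of_le hij
  have hn0 : (0 : ℝ) < n := by positivity
  set a := π / (2 * (n : ℝ)) with ha
  have ha0 : 0 < a := by positivity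
  have hna : (n : ℝ) * a = π / 2 := by rw [ha]; field_simp
  have e : (((j + d : ℕ) : ℝ) - j) = d := by push_cast; ring
  rw [e]
  have hd : (d : ℝ) ≤ 2 * n := by exact_mod_cast (by omega : d ≤ 2 * n)
  have hd0 : (0 : ℝ) ≤ d := by positivity
  have hs : 0 ≤ Real.sin (d * a) :=
    Real.sin_nonneg_of_nonneg_of_le_pi (by positivity) (by nlinarith)
  rw [abs_of_nonneg hs, ← Real.cos_pi_div_two_sub, ← hna]
  rcases lt_or_gt_of_ne (show d ≠ n by omega) with h | h
  · have h' : (d : ℝ) + 1 ≤ n := by exact_mod_cast h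
    have := Real.cos_le_cos_of_nonneg_of_le_pi (x := a) (y := n * a - d * a) ha0.le
      (by nlinarith [Real.pi_pos]) (by nlinarith)
    linarith
  · have h' : (n : ℝ) + 1 ≤ d := by exact_mod_cast h
    have := Real.cos_le_cos_of_nonneg_of_le_pi (x := a) (y := d * a - n * a) ha0.le
      (by nlinarith [Real.pi_pos]) (by nlinarith)
    rw [← Real.cos_neg (n * a - d * a), neg_sub]
    linarith

/-- For `2n` points equidistributed on the unit circle and
`2 cos (π / (2n)) ≤ ρ < 2`, a subset is a simplex of the Vietoris–Rips complex
`VR(X, ρ)` iff it contains no antipodal pair; hence `VR(X, ρ)` is combinatorially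
equivalent to the boundary complex of the `n`-dimensional cross-polytope. -/
theorem vietorisRips_circle_eq_crossPolytope
    (n : ℕ) (hn : 2 ≤ n) (ρ : ℝ) (hρ₁ : 2 * Real.cos (π / (2 * n)) ≤ ρ) (hρ₂ : ρ < 2)
    (F : Finset (EuclideanSpace ℝ (Fin 2)))
    (hF : F ⊆ (Finset.range (2 * n)).image (circlePt n)) :
    (∀ x ∈ F, ∀ x' ∈ F, ‖x - x'‖ ≤ ρ) ↔
      ∀ k < 2 * n, ¬(circlePt n k ∈ F ∧ circlePt n ((k + n) % (2 * n)) ∈ F) := by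
  constructor
  · rintro h k hk ⟨h1, h2⟩
    have h3 := h _ h1 _ h2
    rw [circlePt_dist _ _ _ hn] at h3
    have hn0 : (n : ℝ) ≠ 0 := by positivity
    have h4 : |Real.sin (((k : ℝ) - ((k + n) % (2 * n) : ℕ)) * (π / (2 * n)))| = 1 := by
      rcases lt_or_ge k n with hk' | hk'
      · rw [Nat.mod_eq_of_lt (by omega)]
        have : ((k : ℝ) - ((k + n : ℕ) : ℝ)) * (π / (2 * n)) = -(π / 2) := by
          push_cast; field_simp; ring
        rw [this]; simp
      · obtain ⟨d, rfl⟩ := Nat.exists_eq_add_of_le hk'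
        have e : (n + d + n) % (2 * n) = d := by
          rw [show n + d + n = d + 2 * n by ring, Nat.add_mod_right, Nat.mod_eq_of_lt (by omega)]
        rw [e]
        have : (((n + d : ℕ) : ℝ) - d) * (π / (2 * n)) = π / 2 := by
          push_cast; field_simp; ring
        rw [this]; simp
    rw [h4] at h3
    linarith
  · intro h x hx y hy
    obtain ⟨i, hi, rfl⟩ := Finset.mem_image.1 (hF hx)
    obtain ⟨j, hj, rfl⟩ := Finset.mem_image.1 (hF hy)
    rw [Finset.mem_range] at hi hj
    refine le_trans ?_ hρ₁
    rcases le_total j i with hij | hij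
    · refine circlePt_le n i j hn hi hij fun e => h j hj ⟨hy, ?_⟩
      rwa [← e, Nat.mod_eq_of_lt hi]
    · rw [norm_sub_rev]
      refine circlePt_le n j i hn hj hij fun e => h i hi ⟨hx, ?_⟩
      rwa [← e, Nat.mod_eq_of_lt hj]
end

section
/- (Borel–Cantelli, pairwise independent version) Let (Ω, 𝔉, ℙ) be a probability space and let E_1, E_2, … be a sequence of pairwise independent measurable events with ∑_{i=1}^∞ ℙ(E_i) = ∞. Then ℙ(limsup_{i→∞} E_i) = 1, i.e. almost surely infinitely many of the events E_i occur. -/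
open MeasureTheory Filter

lemma bc_aux {Ω : Type*} [MeasurableSpace Ω]
    (μ : Measure Ω) [IsProbabilityMeasure μ]
    (E : ℕ → Set Ω) (hE : ∀ i, MeasurableSet (E i))
    (hindep : ∀ i j, i ≠ j → μ (E i ∩ E j) = μ (E i) * μ (E j)) (s : Finset ℕ)
    (hs : 0 < ∑ i ∈ s, μ.real (E i)) :
    μ {ω | ∀ i ∈ s, ω ∉ E i} ≤ ENNReal.ofReal (∑ i ∈ s, μ.real (E i))⁻¹ := by
  set M := ∑ i ∈ s, μ.real (E i) with hM
  let X : ℕ → Ω → ℝ := fun i => (E i).indicator 1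
  have hX : ∀ i, MemLp (X i) 2 μ := fun i =>
    memLp_indicator_const 2 (hE i) (1 : ℝ) (Or.inr (measure_ne_top _ _))
  have hint : ∀ i, ∫ ω, X i ω ∂μ = μ.real (E i) := fun i => integral_indicator_one (hE i)
  have hS : MemLp (∑ i ∈ s, X i) 2 μ := memLp_finsetSum' s fun i _ => hX i
  have hmean : ∫ ω, (∑ i ∈ s, X i) ω ∂μ = M := by
    simp only [Finset.sum_apply]
    rw [integral_finsetSum _ fun i _ => (hX i).integrable (by norm_num)]
    simp [hint, hM]
  have hvar : ProbabilityTheory.variance (∑ i ∈ s, X i) μ ≤ M := by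
    rw [ProbabilityTheory.variance_sum' (fun i _ => hX i)]
    refine Finset.sum_le_sum fun i hi => ?_
    rw [Finset.sum_eq_single_of_mem i hi]
    · rw [ProbabilityTheory.covariance_self (hX i).aemeasurable]
      refine (ProbabilityTheory.variance_le_expectation_sq (hX i).1).trans ?_
      rw [← hint i]
      refine le_of_eq (integral_congr_ae (ae_of_all _ fun ω => ?_))
      by_cases h : ω ∈ E i <;> simp [X, h]
    · intro j _ hij
      rw [ProbabilityTheory.covariance_eq_sub (hX i) (hX j), hint, hint]
      have hmul : X i * X j = (E i ∩ E j).indicator 1 := by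
        ext ω
        by_cases h : ω ∈ E i <;> by_cases h' : ω ∈ E j <;> simp [X, h, h']
      rw [hmul, integral_indicator_one ((hE i).inter (hE j))]
      simp [Measure.real, hindep i j hij.symm]
  have hc := ProbabilityTheory.meas_ge_le_variance_div_sq hS hs
  rw [hmean] at hc
  refine (measure_mono fun ω hω => ?_).trans (hc.trans (ENNReal.ofReal_le_ofReal ?_))
  · have : (∑ i ∈ s, X i) ω = 0 := by
      rw [Finset.sum_apply]
      exact Finset.sum_eq_zero fun i hi => by simp [X, hω i hi]
    simp only [Set.mem_ofPred_eq, this, zero_sub, abs_neg]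
    exact le_abs_self _
  · calc _ ≤ M / M ^ 2 := by gcongr
      _ = M⁻¹ := by field_simp

/-- Borel–Cantelli lemma, pairwise independent version: if the events `E i` are
pairwise independent and their probabilities sum to infinity, then almost surely
infinitely many of the events occur. -/
theorem borel_cantelli_pairwise_independent {Ω : Type*} [MeasurableSpace Ω]
    (μ : Measure Ω) [IsProbabilityMeasure μ]
    (E : ℕ → Set Ω) (hE : ∀ i, MeasurableSet (E i))
    (hindep : ∀ i j, i ≠ j → μ (E i ∩ E j) = μ (E i) * μ (E j))
    (hdiv : ∑' i, μ (E i) = ⊤) :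
    μ (Filter.limsup E Filter.atTop) = 1 := by
  have hns : ¬ Summable fun i => μ.real (E i) := by
    intro h
    have h2 := h.tsum_ofReal_ne_top
    refine h2 ?_
    rw [← hdiv]
    exact tsum_congr fun i => ofReal_measureReal (measure_ne_top _ _)
  have key : ∀ n, ∀ᵐ ω ∂μ, ∃ i, n ≤ i ∧ ω ∈ E i := by
    intro n
    have hns' : ¬ Summable fun i => μ.real (E (i + n)) := by
      rwa [summable_nat_add_iff (f := fun i => μ.real (E i)) n]
    have ht := (not_summable_iff_tendsto_nat_atTop_of_nonneg
      (fun i => measureReal_nonneg)).1 hns'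
    have ht0 := ENNReal.tendsto_ofReal (tendsto_inv_atTop_zero.comp ht)
    rw [ENNReal.ofReal_zero] at ht0
    rw [ae_iff]
    refine le_antisymm (ge_of_tendsto ht0 ?_) bot_le
    filter_upwards [ht.eventually_gt_atTop 0] with k hk
    refine le_trans (measure_mono ?_) (bc_aux μ (fun i => E (i + n)) (fun i => hE _)
      (fun i j hij => hindep _ _ (by omega)) (Finset.range k) hk)
    intro ω hω i _ hi
    exact hω ⟨i + n, by omega, hi⟩
  have hall := ae_all_iff.2 key
  have hm : MeasurableSet (limsup E atTop) := .measurableSet_limsup hE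
  rw [← mem_ae_iff_prob_eq_one hm]
  filter_upwards [hall] with ω hω
  rw [mem_limsup_iff_frequently_mem, frequently_atTop]
  exact hω
end

section
/- Let (Ω, 𝔉, ℙ) be a probability space and let E, F, D⁻, D⁺ be measurable events satisfying ℙ(E ∩ F ∩ D⁻ ∩ D⁺) = ℙ(E ∩ D⁻)·ℙ(F ∩ D⁺). Then |ℙ(E ∩ F) − ℙ(E)·ℙ(F)| ≤ 2·ℙ(F ∩ (D⁺)ᶜ) + 3·ℙ(E ∩ (D⁻)ᶜ). -/
open MeasureTheory

/-- Decorrelation inequality: if the events `E, F` become independent after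
intersecting with the half-space connection events `D⁻, D⁺`, then the covariance of
`E` and `F` is controlled by the probabilities of `F ∩ (D⁺)ᶜ` and `E ∩ (D⁻)ᶜ`. -/
theorem decorrelation_inequality {Ω : Type*} [MeasurableSpace Ω]
    (μ : Measure Ω) [IsProbabilityMeasure μ]
    (E F Dm Dp : Set Ω)
    (hE : MeasurableSet E) (hF : MeasurableSet F)
    (hDm : MeasurableSet Dm) (hDp : MeasurableSet Dp)
    (hindep : (μ (E ∩ F ∩ Dm ∩ Dp)).toReal = (μ (E ∩ Dm)).toReal * (μ (F ∩ Dp)).toReal) :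
    |(μ (E ∩ F)).toReal - (μ E).toReal * (μ F).toReal| ≤
      2 * (μ (F ∩ Dpᶜ)).toReal + 3 * (μ (E ∩ Dmᶜ)).toReal := by
  change (μ.real (E ∩ F ∩ Dm ∩ Dp)) = μ.real (E ∩ Dm) * μ.real (F ∩ Dp) at hindep
  change |μ.real (E ∩ F) - μ.real E * μ.real F| ≤
    2 * μ.real (F ∩ Dpᶜ) + 3 * μ.real (E ∩ Dmᶜ)
  have h1 : μ.real (E ∩ Dm) + μ.real (E ∩ Dmᶜ) = μ.real E := by
    rw [← Set.sdiff_eq]; exact measureReal_inter_add_sdiff hDm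
  have h2 : μ.real (F ∩ Dp) + μ.real (F ∩ Dpᶜ) = μ.real F := by
    rw [← Set.sdiff_eq]; exact measureReal_inter_add_sdiff hDp
  have h3 : μ.real (E ∩ F ∩ Dm ∩ Dp) ≤ μ.real (E ∩ F) :=
    measureReal_mono (fun x hx => hx.1.1)
  have h4 : μ.real (E ∩ F) ≤
      μ.real (E ∩ F ∩ Dm ∩ Dp) + μ.real (E ∩ Dmᶜ) + μ.real (F ∩ Dpᶜ) := by
    calc μ.real (E ∩ F)
        ≤ μ.real (((E ∩ F ∩ Dm ∩ Dp) ∪ (E ∩ Dmᶜ)) ∪ (F ∩ Dpᶜ)) := by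
          refine measureReal_mono ?_
          intro x hx
          by_cases a : x ∈ Dm <;> by_cases b : x ∈ Dp <;> simp_all
      _ ≤ μ.real ((E ∩ F ∩ Dm ∩ Dp) ∪ (E ∩ Dmᶜ)) + μ.real (F ∩ Dpᶜ) :=
          measureReal_union_le _ _
      _ ≤ _ := by
          gcongr
          exact measureReal_union_le _ _
  have hE1 : μ.real E ≤ 1 := measureReal_le_one
  have hF1 : μ.real F ≤ 1 := measureReal_le_one
  have pa : 0 ≤ μ.real (E ∩ Dm) := measureReal_nonneg
  have pa' : 0 ≤ μ.real (E ∩ Dmᶜ) := measureReal_nonneg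
  have pb : 0 ≤ μ.real (F ∩ Dp) := measureReal_nonneg
  have pb' : 0 ≤ μ.real (F ∩ Dpᶜ) := measureReal_nonneg
  rw [← h1] at hE1 ⊢
  rw [← h2] at hF1 ⊢
  rw [hindep] at h3 h4
  generalize μ.real (E ∩ Dm) = a at *
  generalize μ.real (E ∩ Dmᶜ) = a' at *
  generalize μ.real (F ∩ Dp) = b at *
  generalize μ.real (F ∩ Dpᶜ) = b' at *
  have k1 : a * b' ≤ b' := mul_le_of_le_one_left pb' (by linarith)
  have k2 : a' * (b + b') ≤ a' := mul_le_of_le_one_right pa' hF1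
  have k3 : 0 ≤ a * b' := by positivity
  have k4 : 0 ≤ a' * (b + b') := by positivity
  rw [abs_le]
  constructor <;> linarith
end

section
/- Let (Ω, 𝔉, ℙ) be a probability space, let c ∈ (0,1], and let E_1, E_2, … be measurable events such that ℙ(E_i) ≥ c for all i ≥ 1 and |ℙ(E_i ∩ E_j) − ℙ(E_i)·ℙ(E_j)| ≤ 1/i² for all i, j with j > i ≥ 1. Then ℙ(limsup_{i→∞} E_i) = 1, i.e. almost surely infinitely many of the events E_i occur. -/
open MeasureTheory Filter

theorem aux_cov {Ω : Type*} [MeasurableSpace Ω]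
    (μ : Measure Ω) [IsProbabilityMeasure μ] (A B : Set Ω) (hA : MeasurableSet A)
    (hB : MeasurableSet B) :
    ProbabilityTheory.covariance (A.indicator (fun _ => (1:ℝ))) (B.indicator (fun _ => (1:ℝ))) μ
      = (μ (A ∩ B)).toReal - (μ A).toReal * (μ B).toReal := by
  have e1 : ∀ C : Set Ω, MeasurableSet C → ∫ x, C.indicator (fun _ => (1:ℝ)) x ∂μ = (μ C).toReal := by
    intro C hC
    rw [integral_indicator hC]
    simp [Measure.real]
  have m1 : ∀ C : Set Ω, MeasurableSet C → MemLp (C.indicator (fun _ => (1:ℝ))) 2 μ := 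
    fun C hC => memLp_indicator_const 2 hC 1 (Or.inr (measure_ne_top _ _))
  rw [ProbabilityTheory.covariance_eq_sub (m1 A hA) (m1 B hB), e1 A hA, e1 B hB, ← e1 _ (hA.inter hB)]
  congr 2
  ext x
  by_cases h1 : x ∈ A <;> by_cases h2 : x ∈ B <;> simp [h1, h2]

theorem aux_tail {Ω : Type*} [MeasurableSpace Ω]
    (μ : Measure Ω) [IsProbabilityMeasure μ]
    (c : ℝ) (hc : 0 < c)
    (E : ℕ → Set Ω) (hE : ∀ i, MeasurableSet (E i))
    (hlow : ∀ i, 1 ≤ i → c ≤ (μ (E i)).toReal)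
    (hcov : ∀ i j : ℕ, 1 ≤ i → i < j →
      |(μ (E i ∩ E j)).toReal - (μ (E i)).toReal * (μ (E j)).toReal| ≤ 1 / (i : ℝ) ^ 2)
    (m : ℕ) (hm : 1 ≤ m) : μ (⋂ i ≥ m, (E i)ᶜ) = 0 := by
  set X : ℕ → Ω → ℝ := fun i => (E i).indicator (fun _ => (1:ℝ)) with hX
  have m1 : ∀ i, MemLp (X i) 2 μ := 
    fun i => memLp_indicator_const 2 (hE i) 1 (Or.inr (measure_ne_top _ _))
  set K : ℝ := 1 + 2 * ∑' i : ℕ, 1 / (i:ℝ)^2 with hK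
  have hsum : Summable (fun i : ℕ => 1 / (i:ℝ)^2) := Real.summable_one_div_nat_pow.2 (by norm_num)
  have mS : ∀ N, MemLp (∑ i ∈ Finset.Ico m (m+N), X i) 2 μ := fun N =>
    memLp_finset_sum' _ (fun i _ => m1 i)
  have hvar : ∀ N : ℕ, ProbabilityTheory.variance (∑ i ∈ Finset.Ico m (m+N), X i) μ ≤ N * K := by
    intro N
    induction N with
    | zero => simp
    | succ N ih =>
      rw [← add_assoc, Finset.sum_Ico_succ_top (by omega), ProbabilityTheory.variance_add (mS N) (m1 _),
        ProbabilityTheory.covariance_sum_left' (fun i _ => m1 i) (m1 _)]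
      have h1 : ProbabilityTheory.variance (X (m+N)) μ ≤ 1 := by
        rw [← ProbabilityTheory.covariance_self (m1 _).aemeasurable, aux_cov μ _ _ (hE _) (hE _)]
        have : (μ (E (m+N) ∩ E (m+N))).toReal ≤ 1 := measureReal_le_one
        nlinarith [mul_self_nonneg (μ (E (m+N))).toReal]
      have h2 : ∑ i ∈ Finset.Ico m (m+N), ProbabilityTheory.covariance (X i) (X (m+N)) μ
          ≤ ∑' i : ℕ, 1 / (i:ℝ)^2 := by
        refine le_trans (Finset.sum_le_sum fun i hi => ?_)
          (hsum.sum_le_tsum (Finset.Ico m (m+N)) (fun i _ => by positivity))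
        rw [Finset.mem_Ico] at hi
        rw [aux_cov μ _ _ (hE _) (hE _)]
        exact (le_abs_self _).trans (hcov i (m+N) (by omega) hi.2)
      push_cast
      linarith
  have hq : ∀ N : ℕ, 1 ≤ N → μ (⋂ i ≥ m, (E i)ᶜ) ≤ ENNReal.ofReal ((K / c^2) / N) := by
    intro N hN
    have hN' : (0:ℝ) < N := by exact_mod_cast hN
    have hcN : 0 < c * N := by positivity
    refine (measure_mono ?_).trans ((ProbabilityTheory.meas_ge_le_variance_div_sq (mS N) hcN).trans
      (ENNReal.ofReal_le_ofReal ?_))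
    · intro x hx
      simp only [Set.mem_iInter, Set.mem_compl_iff] at hx
      have z : (∑ i ∈ Finset.Ico m (m+N), X i) x = 0 := by
        rw [Finset.sum_apply]
        refine Finset.sum_eq_zero fun i hi => ?_
        simp [hX, hx i (Finset.mem_Ico.1 hi).1]
      have e : ∫ y, (∑ i ∈ Finset.Ico m (m+N), X i) y ∂μ = ∑ i ∈ Finset.Ico m (m+N), (μ (E i)).toReal := by
        simp only [Finset.sum_apply]
        rw [integral_finset_sum _ (fun i _ => (m1 i).integrable (by norm_num))]
        refine Finset.sum_congr rfl fun i _ => ?_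
        simp only [hX]
        rw [integral_indicator (hE i)]
        simp [Measure.real]
      have l : c * N ≤ ∑ i ∈ Finset.Ico m (m+N), (μ (E i)).toReal := by
        have := Finset.card_nsmul_le_sum (Finset.Ico m (m+N)) (fun i => (μ (E i)).toReal) c
          (fun i hi => hlow i (hm.trans (Finset.mem_Ico.1 hi).1))
        simpa [mul_comm] using this
      rw [Set.mem_setOf_eq, z, e, zero_sub, abs_neg]
      exact l.trans (le_abs_self _)
    · rw [div_div, div_le_div_iff₀ (by positivity) (by positivity)]
      have := mul_le_mul_of_nonneg_right (hvar N) (show 0 ≤ c^2 * N by positivity)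
      nlinarith
  have ht : Tendsto (fun N : ℕ => ENNReal.ofReal ((K / c^2) / N)) atTop (nhds 0) := by
    have := ENNReal.tendsto_ofReal (tendsto_const_div_atTop_nhds_zero_nat (K / c^2))
    simpa using this
  exact le_antisymm (ge_of_tendsto ht (eventually_atTop.2 ⟨1, hq⟩)) zero_le

/-- If the events `E i` (for `i ≥ 1`) all have probability at least `c > 0` and the
covariances decay like `1/i²`, then almost surely infinitely many of the events
occur. -/
theorem limsup_eq_one_of_unif_lower_bound_and_cov_decay {Ω : Type*} [MeasurableSpace Ω]
    (μ : Measure Ω) [IsProbabilityMeasure μ]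
    (c : ℝ) (hc : c ∈ Set.Ioc (0 : ℝ) 1)
    (E : ℕ → Set Ω) (hE : ∀ i, MeasurableSet (E i))
    (hlow : ∀ i, 1 ≤ i → c ≤ (μ (E i)).toReal)
    (hcov : ∀ i j : ℕ, 1 ≤ i → i < j →
      |(μ (E i ∩ E j)).toReal - (μ (E i)).toReal * (μ (E j)).toReal| ≤ 1 / (i : ℝ) ^ 2) :
    μ (Filter.limsup E Filter.atTop) = 1 := by
  rw [← prob_compl_eq_zero_iff (MeasurableSet.measurableSet_limsup hE)]
  refine measure_mono_null (t := ⋃ m : ℕ, ⋂ i ≥ m + 1, (E i)ᶜ) ?_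
    (measure_iUnion_null fun m => aux_tail μ c hc.1 E hE hlow hcov (m+1) (by omega))
  intro x hx
  rw [Set.mem_compl_iff, mem_limsup_iff_frequently_mem, not_frequently, eventually_atTop] at hx
  obtain ⟨a, ha⟩ := hx
  simp only [Set.mem_iUnion, Set.mem_iInter]
  exact ⟨a, fun i hi => ha i (by omega)⟩
end
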